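/- For every real number α > 0, there exists a unique infinitely differentiable function τ : ℝ → ℝ such that τ(t) > 0 for all t ∈ ℝ, τ(0) = 1, τ'(0) = 0, and τ''(t) = α / (2 τ(t)^(1+α)) for all t ∈ ℝ. -/

import Mathlib

/-!
The energy `τ'² + τ^(-α)` is constant and positive, say `ω²`, so a solution moves on the curve
`τ^(α/2) = cosh u / ω`, `τ' = ω tanh u`. In terms of the hyperbolic angle `u` the second-order
equation becomes the separable equation `u' = α ω / (2 τ)` with `τ = (cosh u / ω)^(2/α)`.
Since `cosh ≥ 1`, the elapsed time is a primitive in `u` of a function bounded below by a positive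
constant. This primitive is a bijection of `ℝ`, and its inverse is the only possible angle.
-/

open Set Function Filter

theorem surjective_of_le_deriv {T : ℝ → ℝ} {c : ℝ} (hT : Differentiable ℝ T) (hc : 0 < c)
    (hcT : ∀ x, c ≤ deriv T x) : Surjective T := by
  have growth {x y : ℝ} (hxy : x ≤ y) : c * (y - x) ≤ T y - T x :=
    mul_sub_le_image_sub_of_le_deriv hT hcT hxy
  refine hT.continuous.surjective ?_ ?_
  · refine tendsto_atTop_mono' _ ?_
      (tendsto_atTop_add_const_right _ (T 0) (tendsto_id.const_mul_atTop hc))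
    filter_upwards [eventually_ge_atTop 0] with x hx
    simp only [id]
    linarith [growth hx]
  · refine tendsto_atBot_mono' _ ?_
      (tendsto_atBot_add_const_right _ (T 0) (tendsto_id.const_mul_atBot hc))
    filter_upwards [eventually_le_atBot 0] with x hx
    simp only [id]
    linarith [growth hx]

theorem continuous_of_strictMono_of_rightInverse {X Y : Type*} [LinearOrder X]
    [TopologicalSpace X] [OrderTopology X] [Preorder Y] [TopologicalSpace Y] [OrderTopology Y]
    {T : X → Y} {u : Y → X} (hT : StrictMono T) (hu : RightInverse u T) : Continuous u := by
  let e : X ≃o Y := hT.orderIsoOfRightInverse T u hu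
  exact e.symm.continuous

theorem hasDerivAt_inv_comp_and_eq_iff_rightInverse {T f u : ℝ → ℝ} {t₀ : ℝ}
    (hT : ∀ x, HasDerivAt T (f x) x) (hf : ∀ x, 0 < f x) :
    ((∀ t, HasDerivAt u (f (u t))⁻¹ t) ∧ T (u t₀) = t₀) ↔ RightInverse u T := by
  constructor
  · rintro ⟨hu, h₀⟩ t
    have elapsed (s : ℝ) : HasDerivAt (fun s ↦ T (u s) - s) 0 s := by
      refine (((hT (u s)).comp s (hu s)).sub (hasDerivAt_id s)).congr_deriv ?_
      rw [mul_inv_cancel₀ (hf (u s)).ne', sub_self]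
    have hconst : T (u t) - t = T (u t₀) - t₀ :=
      is_const_of_deriv_eq_zero (fun s ↦ (elapsed s).differentiableAt)
        (fun s ↦ (elapsed s).deriv) t t₀
    linarith
  · intro hu
    have hmono : StrictMono T := strictMono_of_deriv_pos fun x ↦ (hT x).deriv ▸ hf x
    have hcont : Continuous u := continuous_of_strictMono_of_rightInverse hmono hu
    exact ⟨fun t ↦ .of_local_left_inverse hcont.continuousAt (hT (u t)) (hf (u t)).ne'
      (.of_forall hu), hu t₀⟩

theorem existsUnique_hasDerivAt_inv_comp {f : ℝ → ℝ} {c : ℝ} (hf : Continuous f) (hc : 0 < c)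
    (hcf : ∀ x, c ≤ f x) (t₀ x₀ : ℝ) :
    ∃! u : ℝ → ℝ, (∀ t, HasDerivAt u (f (u t))⁻¹ t) ∧ u t₀ = x₀ := by
  let T : ℝ → ℝ := fun x ↦ t₀ + ∫ s in x₀..x, f s
  have hT (x : ℝ) : HasDerivAt T (f x) x :=
    (hf.integral_hasStrictDerivAt x₀ x).hasDerivAt.const_add t₀
  have hpos (x : ℝ) : 0 < f x := hc.trans_le (hcf x)
  have hinj : Injective T :=
    (strictMono_of_deriv_pos fun x ↦ (hT x).deriv ▸ hpos x).injective
  have hsurj : Surjective T :=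
    surjective_of_le_deriv (fun x ↦ (hT x).differentiableAt) hc fun x ↦ (hT x).deriv ▸ hcf x
  have hinit (u : ℝ → ℝ) : u t₀ = x₀ ↔ T (u t₀) = t₀ := by
    rw [← hinj.eq_iff, show T x₀ = t₀ by simp [T]]
  simp only [hinit, hasDerivAt_inv_comp_and_eq_iff_rightInverse hT hpos]
  obtain ⟨u, hu⟩ := hsurj.hasRightInverse
  exact ⟨u, hu, fun v hv ↦ funext fun t ↦ hinj ((hv t).trans (hu t).symm)⟩

theorem contDiff_of_hasDerivAt_comp {E : Type*} [NormedAddCommGroup E] [NormedSpace ℝ E]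
    [CompleteSpace E] {n : ℕ∞} {v : E → E} {s : Set E} {γ : ℝ → E} (hv : ContDiffOn ℝ n v s)
    (hγ : ∀ t, HasDerivAt γ (v (γ t)) t) (hs : ∀ t, γ t ∈ s) : ContDiff ℝ n γ := by
  refine contDiff_iff_contDiffAt.2 fun t ↦ ?_
  have hIcc : ContDiffOn ℝ n γ (Icc (t - 1) (t + 1)) :=
    ODE.contDiffOn_enat_Icc_of_hasDerivWithinAt (f := fun _ ↦ v)
      (hv.comp contDiffOn_snd fun p hp ↦ hp.2)
      (fun r _ ↦ (hγ r).hasDerivWithinAt) fun r _ ↦ hs r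
  exact hIcc.contDiffAt (Icc_mem_nhds (by linarith) (by linarith))

theorem rpow_eq_sq_rpow_half {x : ℝ} (hx : 0 ≤ x) (a : ℝ) : x ^ a = (x ^ (a / 2)) ^ 2 := by
  rw [← Real.rpow_mul_natCast hx, Nat.cast_ofNat, div_mul_cancel₀ a two_ne_zero]

theorem rpow_one_add_eq {x : ℝ} (hx : 0 < x) (a : ℝ) : x ^ (1 + a) = x * (x ^ (a / 2)) ^ 2 := by
  rw [Real.rpow_add hx, Real.rpow_one, rpow_eq_sq_rpow_half hx.le]

/-- A positive global solution `τ` of `τ'' = α / (2 τ^(1+α))` together with its velocity `w = τ'`,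
that is, an integral curve of the corresponding first-order system. -/
structure IsScalingSolution (α : ℝ) (τ w : ℝ → ℝ) : Prop where
  pos : ∀ t, 0 < τ t
  hasDerivAt : ∀ t, HasDerivAt τ (w t) t
  hasDerivAt_velocity : ∀ t, HasDerivAt w (α / (2 * τ t ^ (1 + α))) t

/-- The hyperbolic angle of the state `(x, y)`: position `x > 0` and velocity `y` of a scaling
solution. With `ω² = y² + x^(-α)` one has `cosh u = ω x^(α/2)` and `ω tanh u = y`. -/
noncomputable def scalingAngle (α x y : ℝ) : ℝ := Real.arsinh (y * x ^ (α / 2))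

/-- The position with hyperbolic angle `u` on the level set of energy `ω²`; it inverts
`scalingAngle` there. -/
noncomputable def scalingRadius (α ω u : ℝ) : ℝ := (Real.cosh u / ω) ^ (2 / α)

section Coordinates

variable {α ω x y : ℝ}

theorem scalingRadius_pos (hω : 0 < ω) (u : ℝ) : 0 < scalingRadius α ω u :=
  Real.rpow_pos_of_pos (div_pos (Real.cosh_pos u) hω) _

theorem continuous_scalingRadius (hω : 0 < ω) : Continuous (scalingRadius α ω) :=
  (Real.continuous_cosh.div_const ω).rpow_const fun u ↦ .inl (div_pos (Real.cosh_pos u) hω).ne'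

theorem scalingRadius_zero_le (hα : 0 ≤ α) (hω : 0 < ω) (u : ℝ) :
    scalingRadius α ω 0 ≤ scalingRadius α ω u := by
  unfold scalingRadius
  gcongr
  exact Real.cosh_le_cosh.2 (by simp)

theorem scalingRadius_rpow_half (hα : α ≠ 0) (hω : 0 < ω) (u : ℝ) :
    scalingRadius α ω u ^ (α / 2) = Real.cosh u / ω := by
  rw [scalingRadius, ← Real.rpow_mul (div_pos (Real.cosh_pos u) hω).le,
    show 2 / α * (α / 2) = 1 by field_simp, Real.rpow_one]

theorem cosh_scalingAngle (hω : 0 < ω) (hx : 0 < x) (hE : y ^ 2 + x ^ (-α) = ω ^ 2) :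
    Real.cosh (scalingAngle α x y) = ω * x ^ (α / 2) := by
  have hsq : 1 + (y * x ^ (α / 2)) ^ 2 = (ω * x ^ (α / 2)) ^ 2 := by
    rw [mul_pow ω, ← hE, Real.rpow_neg hx.le, rpow_eq_sq_rpow_half hx.le α]
    field_simp
    ring
  rw [scalingAngle, Real.cosh_arsinh, hsq, Real.sqrt_sq (by positivity)]

theorem scalingRadius_scalingAngle (hα : α ≠ 0) (hω : 0 < ω) (hx : 0 < x)
    (hE : y ^ 2 + x ^ (-α) = ω ^ 2) : scalingRadius α ω (scalingAngle α x y) = x := by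
  rw [scalingRadius, cosh_scalingAngle hω hx hE, mul_div_cancel_left₀ _ hω.ne',
    ← Real.rpow_mul hx.le, show α / 2 * (2 / α) = 1 by field_simp, Real.rpow_one]

theorem mul_tanh_scalingAngle (hω : 0 < ω) (hx : 0 < x) (hE : y ^ 2 + x ^ (-α) = ω ^ 2) :
    ω * Real.tanh (scalingAngle α x y) = y := by
  rw [Real.tanh_eq_sinh_div_cosh, cosh_scalingAngle hω hx hE, scalingAngle, Real.sinh_arsinh]
  field_simp

end Coordinates

theorem existsUnique_angle {α ω : ℝ} (hα : 0 < α) (hω : 0 < ω) (t₀ u₀ : ℝ) :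
    ∃! u : ℝ → ℝ,
      (∀ t, HasDerivAt u (α * ω / (2 * scalingRadius α ω (u t))) t) ∧ u t₀ = u₀ := by
  have h0 : 0 < scalingRadius α ω 0 := scalingRadius_pos hω 0
  simpa only [inv_div] using existsUnique_hasDerivAt_inv_comp
    (f := fun u ↦ 2 * scalingRadius α ω u / (α * ω)) (c := 2 * scalingRadius α ω 0 / (α * ω))
    (((continuous_scalingRadius hω).const_mul 2).div_const _) (by positivity)
    (fun u ↦ by gcongr; exact scalingRadius_zero_le hα.le hω u) t₀ u₀

theorem isScalingSolution_of_angle {α ω : ℝ} {u : ℝ → ℝ} (hα : α ≠ 0) (hω : 0 < ω)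
    (hu : ∀ t, HasDerivAt u (α * ω / (2 * scalingRadius α ω (u t))) t) :
    IsScalingSolution α (fun t ↦ scalingRadius α ω (u t)) fun t ↦ ω * Real.tanh (u t) where
  pos t := scalingRadius_pos hω (u t)
  hasDerivAt t := by
    have hR : scalingRadius α ω (u t) ≠ 0 := (scalingRadius_pos hω (u t)).ne'
    have hcosh : Real.cosh (u t) ≠ 0 := (Real.cosh_pos (u t)).ne'
    have hbase : Real.cosh (u t) / ω ≠ 0 := div_ne_zero hcosh hω.ne'
    refine (((hu t).cosh.div_const ω).rpow_const (p := 2 / α) (.inl hbase)).congr_deriv ?_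
    rw [Real.rpow_sub_one hbase, ← scalingRadius, Real.tanh_eq_sinh_div_cosh]
    field_simp
  hasDerivAt_velocity t := by
    have hR : scalingRadius α ω (u t) ≠ 0 := (scalingRadius_pos hω (u t)).ne'
    have hcosh : Real.cosh (u t) ≠ 0 := (Real.cosh_pos (u t)).ne'
    simp only [Real.tanh_eq_sinh_div_cosh]
    refine (((hu t).sinh.div (hu t).cosh hcosh).const_mul ω).congr_deriv ?_
    rw [rpow_one_add_eq (scalingRadius_pos hω (u t)), scalingRadius_rpow_half hα hω]
    field_simp
    exact Real.cosh_sq_sub_sinh_sq (u t)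

namespace IsScalingSolution

variable {α ω : ℝ} {τ w : ℝ → ℝ}

theorem energy_eq (h : IsScalingSolution α τ w) (t s : ℝ) :
    w t ^ 2 + τ t ^ (-α) = w s ^ 2 + τ s ^ (-α) := by
  have hE (r : ℝ) : HasDerivAt (fun t ↦ w t ^ 2 + τ t ^ (-α)) 0 r := by
    have hτ := h.pos r
    refine (((h.hasDerivAt_velocity r).pow 2).add
      ((h.hasDerivAt r).rpow_const (p := -α) (.inl hτ.ne'))).congr_deriv ?_
    rw [show -α - 1 = -(1 + α) by ring, Real.rpow_neg hτ.le]
    field_simp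
    ring
  exact is_const_of_deriv_eq_zero (fun r ↦ (hE r).differentiableAt) (fun r ↦ (hE r).deriv) t s

theorem hasDerivAt_scalingAngle (h : IsScalingSolution α τ w) (hω : 0 < ω)
    (hE : ∀ t, w t ^ 2 + τ t ^ (-α) = ω ^ 2) (t : ℝ) :
    HasDerivAt (fun t ↦ scalingAngle α (τ t) (w t)) (α * ω / (2 * τ t)) t := by
  have hτ := h.pos t
  have hcosh : √(1 + (w t * τ t ^ (α / 2)) ^ 2) = ω * τ t ^ (α / 2) := by
    rw [← Real.cosh_arsinh, ← scalingAngle, cosh_scalingAngle hω hτ (hE t)]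
  have henergy := hE t
  refine ((h.hasDerivAt_velocity t).mul
    ((h.hasDerivAt t).rpow_const (p := α / 2) (.inl hτ.ne'))).arsinh.congr_deriv ?_
  rw [Real.rpow_neg hτ.le, rpow_eq_sq_rpow_half hτ.le α] at henergy
  simp only [Pi.mul_apply, hcosh, rpow_one_add_eq hτ, Real.rpow_sub_one hτ.ne', smul_eq_mul]
  field_simp at henergy ⊢
  linear_combination α * henergy

theorem contDiff (h : IsScalingSolution α τ w) : ContDiff ℝ (⊤ : ℕ∞) τ := by
  have hfield : ContDiffOn ℝ (⊤ : ℕ∞) (fun p : ℝ × ℝ ↦ (p.2, α / (2 * p.1 ^ (1 + α))))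
      {p | 0 < p.1} := by
    refine contDiffOn_snd.prodMk (contDiffOn_const.div (contDiffOn_const.mul
      (contDiffOn_fst.rpow_const_of_ne fun p hp ↦ hp.ne')) fun p hp ↦ ?_)
    exact (mul_pos two_pos (Real.rpow_pos_of_pos hp _)).ne'
  have hcurve : ContDiff ℝ (⊤ : ℕ∞) fun t ↦ (τ t, w t) :=
    contDiff_of_hasDerivAt_comp hfield
      (fun t ↦ (h.hasDerivAt t).prodMk (h.hasDerivAt_velocity t)) h.pos
  exact hcurve.fst

theorem deriv_eq (h : IsScalingSolution α τ w) : deriv τ = w :=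
  funext fun t ↦ (h.hasDerivAt t).deriv

end IsScalingSolution

theorem isScalingSolution_deriv_iff {α : ℝ} {τ : ℝ → ℝ} :
    IsScalingSolution α τ (deriv τ) ↔ ContDiff ℝ (⊤ : ℕ∞) τ ∧ (∀ t, 0 < τ t) ∧
      ∀ t, deriv (deriv τ) t = α / (2 * τ t ^ (1 + α)) := by
  refine ⟨fun h ↦ ⟨h.contDiff, h.pos, fun t ↦ (h.hasDerivAt_velocity t).deriv⟩, ?_⟩
  rintro ⟨hτ, hpos, hode⟩
  obtain ⟨hdiff, hderiv⟩ := contDiff_infty_iff_deriv.1 hτ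
  exact ⟨hpos, fun t ↦ (hdiff t).hasDerivAt,
    fun t ↦ hode t ▸ (hderiv.differentiable (by simp) t).hasDerivAt⟩

theorem existsUnique_isScalingSolution {α τ₀ : ℝ} (hα : 0 < α) (hτ₀ : 0 < τ₀) (t₀ v₀ : ℝ) :
    ∃! τ : ℝ → ℝ, IsScalingSolution α τ (deriv τ) ∧ τ t₀ = τ₀ ∧ deriv τ t₀ = v₀ := by
  obtain ⟨ω, hω, hE₀⟩ : ∃ ω, 0 < ω ∧ v₀ ^ 2 + τ₀ ^ (-α) = ω ^ 2 := by
    have hpos : 0 < v₀ ^ 2 + τ₀ ^ (-α) := by positivity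
    exact ⟨_, Real.sqrt_pos.2 hpos, (Real.sq_sqrt hpos.le).symm⟩
  obtain ⟨u, ⟨hu, hu₀⟩, huniq⟩ := existsUnique_angle hα hω t₀ (scalingAngle α τ₀ v₀)
  have hsol := isScalingSolution_of_angle hα.ne' hω hu
  refine ⟨_, ⟨hsol.deriv_eq ▸ hsol, ?_, ?_⟩, ?_⟩
  · simp only [hu₀, scalingRadius_scalingAngle hα.ne' hω hτ₀ hE₀]
  · simp only [hsol.deriv_eq, hu₀, mul_tanh_scalingAngle hω hτ₀ hE₀]
  · rintro σ ⟨hσ, hσ₀, hσ'₀⟩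
    have hE (t : ℝ) : deriv σ t ^ 2 + σ t ^ (-α) = ω ^ 2 := by
      rw [hσ.energy_eq t t₀, hσ₀, hσ'₀, hE₀]
    have hradius (t : ℝ) : scalingRadius α ω (scalingAngle α (σ t) (deriv σ t)) = σ t :=
      scalingRadius_scalingAngle hα.ne' hω (hσ.pos t) (hE t)
    have hangle : (fun t ↦ scalingAngle α (σ t) (deriv σ t)) = u :=
      huniq _ ⟨fun t ↦ by simpa only [hradius] using hσ.hasDerivAt_scalingAngle hω hE t,
        by simp only [hσ₀, hσ'₀]⟩
    funext t
    rw [← hangle, hradius]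

theorem scaling_ode_exists_unique_general {α τ₀ : ℝ} (hα : 0 < α) (hτ₀ : 0 < τ₀) (t₀ v₀ : ℝ) :
    ∃! τ : ℝ → ℝ, ContDiff ℝ (⊤ : ℕ∞) τ ∧ (∀ t, 0 < τ t) ∧ τ t₀ = τ₀ ∧ deriv τ t₀ = v₀ ∧
      ∀ t, deriv (deriv τ) t = α / (2 * τ t ^ (1 + α)) := by
  refine (existsUnique_congr fun τ ↦ ?_).1 (existsUnique_isScalingSolution hα hτ₀ t₀ v₀)
  rw [isScalingSolution_deriv_iff]
  tauto

/-- Global existence and uniqueness for the scaling ODE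
`τ'' = α / (2 τ^{1+α})`, `τ(0) = 1`, `τ'(0) = 0`, with `τ > 0` everywhere. -/
theorem scaling_ode_exists_unique (α : ℝ) (hα : 0 < α) :
    ∃! τ : ℝ → ℝ, ContDiff ℝ (⊤ : ℕ∞) τ ∧ (∀ t, 0 < τ t) ∧ τ 0 = 1 ∧ deriv τ 0 = 0 ∧
      ∀ t, deriv (deriv τ) t = α / (2 * τ t ^ (1 + α)) :=
  scaling_ode_exists_unique_general hα one_pos 0 0
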